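/- arXiv:1603.01498 — 2 statements merged into one kernel-verified Lean document; each statement's English description precedes it below -/
import Mathlib

section
/- The iterated integral representation of multiple zeta values: ζ(n₁,…,n_r) = ∫_{0≤u_p≤⋯≤u₁≤1} ∏_{j=1}^p du_j/φ_j(u_j), where p = n₁+⋯+n_r, φ_j(u) = 1-u if j ∈ {n₁, n₁+n₂, …, p}, and φ_j(u) = u otherwise, assuming n₁ ≥ 2. -/
open MeasureTheory Finset

/-!
Integrating over the outermost variable `u₁` last turns the integral over the simplex into an
iteration of the operators `F ↦ ∫₀ᵗ F(x) dx/x` and `F ↦ ∫₀ᵗ F(x) dx/(1-x)`. On power series with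
nonnegative coefficients these act termwise: the first divides the `k`-th coefficient by `k`, and
the second, by the geometric series, first replaces the coefficients by their partial sums. A block
of `n₁` variables, all but the last of type `dx/x`, thus maps `∑ aₖ tᵏ` to
`∑ k^(-n₁) (∑_{j<k} aⱼ) tᵏ`, so each block adds one summation index to the nested sum, and `t = 1`
gives the zeta value. Everything is done in `ℝ≥0∞`, where sums and integrals commute freely.
-/

namespace MultipleZeta

open scoped ENNReal

section Sums

lemma tsum_fin_succ {α : Type*} {r : ℕ} (f : (Fin (r + 1) → α) → ℝ≥0∞) :
    ∑' k, f k = ∑' (j : α) (k : Fin r → α), f (Fin.cons j k) := by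
  rw [← (Fin.consEquiv fun _ : Fin (r + 1) => α).tsum_eq, ENNReal.tsum_prod']
  rfl

lemma tsum_mul_tsum_eq_tsum_sum_antidiagonal (f g : ℕ → ℝ≥0∞) :
    (∑' i, f i) * ∑' j, g j = ∑' k, ∑ q ∈ antidiagonal k, f q.1 * g q.2 := by
  calc (∑' i, f i) * ∑' j, g j
      = ∑' q : ℕ × ℕ, f q.1 * g q.2 := by
        simp_rw [ENNReal.tsum_prod', ENNReal.tsum_mul_left, ENNReal.tsum_mul_right]
    _ = ∑' (k : ℕ) (q : antidiagonal k), f q.1.1 * g q.1.2 := by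
        rw [← HasAntidiagonal.sigmaAntidiagonalEquivProd.tsum_eq, ENNReal.tsum_sigma']
        rfl
    _ = ∑' k, ∑ q ∈ antidiagonal k, f q.1 * g q.2 :=
        tsum_congr fun k => Finset.tsum_subtype _ fun q : ℕ × ℕ => f q.1 * g q.2

lemma inv_one_sub_mul_tsum (a : ℕ → ℝ≥0∞) (X : ℝ≥0∞) :
    (1 - X)⁻¹ * ∑' k, a k * X ^ k = ∑' k, (∑ j ∈ range (k + 1), a j) * X ^ k := by
  rw [← ENNReal.tsum_geometric, mul_comm, tsum_mul_tsum_eq_tsum_sum_antidiagonal]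
  refine tsum_congr fun k => ?_
  rw [Nat.sum_antidiagonal_eq_sum_range_succ fun i j => a i * X ^ i * X ^ j, sum_mul]
  refine sum_congr rfl fun j hj => ?_
  rw [mul_assoc, ← pow_add, Nat.add_sub_cancel' (mem_range_succ_iff.1 hj)]

lemma inv_mul_tsum_of_apply_zero {a : ℕ → ℝ≥0∞} (ha : a 0 = 0) {X : ℝ≥0∞} (hX₀ : X ≠ 0)
    (hX : X ≠ ∞) : X⁻¹ * ∑' k, a k * X ^ k = ∑' k, a (k + 1) * X ^ k := by
  rw [tsum_eq_zero_add' ENNReal.summable, ha, zero_mul, zero_add, ← ENNReal.tsum_mul_left]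
  refine tsum_congr fun k => ?_
  calc X⁻¹ * (a (k + 1) * X ^ (k + 1)) = a (k + 1) * X ^ k * (X⁻¹ * X) := by ring
    _ = a (k + 1) * X ^ k := by rw [ENNReal.inv_mul_cancel hX₀ hX, mul_one]

lemma tsum_ite_natCast_lt (a : ℕ → ℝ≥0∞) (m : ℕ) :
    (∑' j : ℕ, if (j : ℕ∞) < m then a j else 0) = ∑ j ∈ range m, a j := by
  rw [tsum_eq_sum (s := range m) fun j hj => if_neg (by simpa using hj)]
  exact sum_congr rfl fun j hj => if_pos (by simpa using hj)

end Sums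

section Integrals

lemma lintegral_pi_fin_succ {p : ℕ} {α : Fin (p + 1) → Type*} [∀ i, MeasurableSpace (α i)]
    (μ : ∀ i, Measure (α i)) [∀ i, SigmaFinite (μ i)] {F : (∀ i, α i) → ℝ≥0∞}
    (hF : Measurable F) :
    ∫⁻ u, F u ∂Measure.pi μ =
      ∫⁻ x, ∫⁻ v, F (Fin.cons x v) ∂Measure.pi (fun i => μ i.succ) ∂μ 0 := by
  have e := (measurePreserving_piFinSuccAbove μ 0).symm
  rw [← e.lintegral_comp_emb (MeasurableEquiv.measurableEmbedding _),
    lintegral_prod (fun z => F ((MeasurableEquiv.piFinSuccAbove α 0).symm z))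
      (hF.comp (MeasurableEquiv.measurable _)).aemeasurable]
  have h_cons (x v) : (MeasurableEquiv.piFinSuccAbove α 0).symm (x, v) = Fin.cons x v :=
    Fin.insertNth_zero x v
  simp only [h_cons]
  rfl

lemma lintegral_Icc_ofReal_pow {t : ℝ} (ht : 0 ≤ t) (k : ℕ) :
    ∫⁻ x in Set.Icc 0 t, ENNReal.ofReal x ^ k =
      ((k + 1 : ℕ) : ℝ≥0∞)⁻¹ * ENNReal.ofReal t ^ (k + 1) := by
  have h_int : ∫ x in Set.Icc 0 t, x ^ k = ((k + 1 : ℕ) : ℝ)⁻¹ * t ^ (k + 1) := by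
    rw [integral_Icc_eq_integral_Ioc, ← intervalIntegral.integral_of_le ht, integral_pow]
    simp [div_eq_inv_mul]
  calc ∫⁻ x in Set.Icc 0 t, ENNReal.ofReal x ^ k
      = ∫⁻ x in Set.Icc 0 t, ENNReal.ofReal (x ^ k) :=
        setLIntegral_congr_fun measurableSet_Icc fun x hx => (ENNReal.ofReal_pow hx.1 k).symm
    _ = ENNReal.ofReal (((k + 1 : ℕ) : ℝ)⁻¹ * t ^ (k + 1)) := by
        rw [← h_int, ofReal_integral_eq_lintegral_ofReal]
        · exact (continuous_pow k).continuousOn.integrableOn_Icc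
        · exact ae_restrict_of_forall_mem measurableSet_Icc fun x hx => pow_nonneg hx.1 k
    _ = ((k + 1 : ℕ) : ℝ≥0∞)⁻¹ * ENNReal.ofReal t ^ (k + 1) := by
        rw [ENNReal.ofReal_mul (by positivity), ENNReal.ofReal_inv_of_pos (by positivity),
          ENNReal.ofReal_natCast, ENNReal.ofReal_pow ht]

lemma lintegral_Icc_tsum_mul_ofReal_pow {t : ℝ} (ht : 0 ≤ t) (a : ℕ → ℝ≥0∞) :
    ∫⁻ x in Set.Icc 0 t, ∑' k, a k * ENNReal.ofReal x ^ k =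
      ∑' k, ((k + 1 : ℕ) : ℝ≥0∞)⁻¹ * a k * ENNReal.ofReal t ^ (k + 1) := by
  rw [lintegral_tsum fun k => by fun_prop]
  refine tsum_congr fun k => ?_
  rw [lintegral_const_mul _ (by fun_prop), lintegral_Icc_ofReal_pow ht]
  ring

end Integrals

section Simplex

/-- The simplex `0 ≤ u_p ≤ ⋯ ≤ u₁ ≤ t`, with `u j` for `j : Fin p` standing for `u_{j+1}`. -/
def orderedSimplex (p : ℕ) (t : ℝ) : Set (Fin p → ℝ) :=
  {u | (∀ j, 0 ≤ u j ∧ u j ≤ t) ∧ ∀ j k, j ≤ k → u k ≤ u j}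

lemma measurableSet_orderedSimplex (p : ℕ) (t : ℝ) : MeasurableSet (orderedSimplex p t) := by
  have h : orderedSimplex p t =
      (⋂ j, {u | 0 ≤ u j ∧ u j ≤ t}) ∩ ⋂ (j) (k) (_ : j ≤ k), {u | u k ≤ u j} := by
    ext u
    simp [orderedSimplex]
  rw [h]
  measurability

lemma orderedSimplex_zero (t : ℝ) : orderedSimplex 0 t = Set.univ := by
  simp [orderedSimplex]

lemma cons_mem_orderedSimplex {p : ℕ} {t x : ℝ} {u : Fin p → ℝ} :
    (Fin.cons x u : Fin (p + 1) → ℝ) ∈ orderedSimplex (p + 1) t ↔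
      x ∈ Set.Icc 0 t ∧ u ∈ orderedSimplex p x := by
  simp only [orderedSimplex, Set.mem_ofPred_eq, Fin.forall_fin_succ, Fin.cons_zero, Fin.cons_succ,
    Set.mem_Icc, Fin.succ_le_succ_iff]
  constructor
  · rintro ⟨⟨hx, hu⟩, ⟨-, hux⟩, h_anti⟩
    exact ⟨hx, fun j => ⟨(hu j).1, hux j (Fin.zero_le _)⟩, fun j => (h_anti j).2⟩
  · rintro ⟨hx, hu, h_anti⟩
    exact ⟨⟨hx, fun j => ⟨(hu j).1, (hu j).2.trans hx.2⟩⟩,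
      ⟨fun _ => le_rfl, fun j _ => (hu j).2⟩,
      fun j => ⟨fun h => absurd h (Fin.succ_pos j).not_ge, h_anti j⟩⟩

lemma setLIntegral_orderedSimplex_succ {p : ℕ} (t : ℝ) {F : (Fin (p + 1) → ℝ) → ℝ≥0∞}
    (hF : Measurable F) :
    ∫⁻ u in orderedSimplex (p + 1) t, F u =
      ∫⁻ x in Set.Icc 0 t, ∫⁻ v in orderedSimplex p x, F (Fin.cons x v) := by
  classical
  rw [← lintegral_indicator (measurableSet_orderedSimplex _ _),
    ← lintegral_indicator measurableSet_Icc, volume_pi,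
    lintegral_pi_fin_succ _ (hF.indicator (measurableSet_orderedSimplex _ _))]
  refine lintegral_congr fun x => ?_
  by_cases hx : x ∈ Set.Icc 0 t
  · rw [Set.indicator_of_mem hx, ← lintegral_indicator (measurableSet_orderedSimplex _ _)]
    simp only [Set.indicator_apply, cons_mem_orderedSimplex, hx, true_and, volume_pi]
  · simp only [Set.indicator_apply, cons_mem_orderedSimplex, hx, false_and, if_false,
      lintegral_zero]

end Simplex

section Words

/-- The density of a letter of an integration word: `dx/(1-x)` for `true`, `dx/x` for `false`. -/
noncomputable def letterDensity (b : Bool) (x : ℝ) : ℝ :=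
  1 / if b then 1 - x else x

lemma measurable_letterDensity (b : Bool) : Measurable (letterDensity b) := by
  unfold letterDensity
  split_ifs <;> fun_prop

lemma letterDensity_nonneg {x : ℝ} (hx₀ : 0 ≤ x) (hx₁ : x ≤ 1) (b : Bool) :
    0 ≤ letterDensity b x := by
  cases b <;> simp [letterDensity, hx₀, hx₁]

/-- The iterated integral over the simplex `0 ≤ u_p ≤ ⋯ ≤ u₁ ≤ t` of the word formed by the first
`p` letters of `w`. Words are prefixes of infinite sequences, so that removing the leading letters
needs no casts between index types. -/
noncomputable def iteratedIntegral (p : ℕ) (w : ℕ → Bool) (t : ℝ) : ℝ≥0∞ :=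
  ∫⁻ u in orderedSimplex p t, ∏ j : Fin p, ENNReal.ofReal (letterDensity (w j) (u j))

lemma iteratedIntegral_zero (w : ℕ → Bool) (t : ℝ) : iteratedIntegral 0 w t = 1 := by
  simp [iteratedIntegral, orderedSimplex_zero, volume_pi]

lemma measurable_prod_letterDensity (p : ℕ) (w : ℕ → Bool) :
    Measurable fun u : Fin p → ℝ => ∏ j : Fin p, ENNReal.ofReal (letterDensity (w j) (u j)) :=
  Finset.measurable_prod _ fun j _ =>
    ((measurable_letterDensity (w j)).comp (measurable_pi_apply j)).ennreal_ofReal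

lemma iteratedIntegral_succ (p : ℕ) (w : ℕ → Bool) (t : ℝ) :
    iteratedIntegral (p + 1) w t = ∫⁻ x in Set.Icc 0 t,
      ENNReal.ofReal (letterDensity (w 0) x) * iteratedIntegral p (fun i => w (i + 1)) x := by
  rw [iteratedIntegral, setLIntegral_orderedSimplex_succ t (measurable_prod_letterDensity _ w)]
  refine lintegral_congr fun x => ?_
  rw [iteratedIntegral, ← lintegral_const_mul _
    (measurable_prod_letterDensity p fun i => w (i + 1))]
  simp only [Fin.prod_univ_succ, Fin.cons_zero, Fin.cons_succ, Fin.val_zero, Fin.val_succ]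

lemma toReal_iteratedIntegral (p : ℕ) (w : ℕ → Bool) {t : ℝ} (ht : t ≤ 1) :
    (iteratedIntegral p w t).toReal =
      ∫ u in orderedSimplex p t, ∏ j : Fin p, letterDensity (w j) (u j) := by
  have h_nonneg : ∀ u ∈ orderedSimplex p t, ∀ j : Fin p, 0 ≤ letterDensity (w j) (u j) :=
    fun u hu j => letterDensity_nonneg (hu.1 j).1 ((hu.1 j).2.trans ht) _
  rw [integral_eq_lintegral_of_nonneg_ae, iteratedIntegral]
  · congr 1
    exact setLIntegral_congr_fun (measurableSet_orderedSimplex p t) fun u hu =>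
      (ENNReal.ofReal_prod_of_nonneg fun j _ => h_nonneg u hu j).symm
  · exact ae_restrict_of_forall_mem (measurableSet_orderedSimplex p t) fun u hu =>
      prod_nonneg fun j _ => h_nonneg u hu j
  · exact (Finset.measurable_prod univ fun (j : Fin p) _ =>
      (measurable_letterDensity (w j)).comp (measurable_pi_apply j)).aestronglyMeasurable

end Words

section PowerSeries

/-- The coefficients of the product of `letterDensity b` with the power series `∑ k, a k * x ^ k`,
where `a 0 = 0` is understood if `b = false`. -/
noncomputable def letterMul (b : Bool) (a : ℕ → ℝ≥0∞) (k : ℕ) : ℝ≥0∞ :=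
  if b then ∑ j ∈ range (k + 1), a j else a (k + 1)

lemma letterDensity_mul_tsum {b : Bool} {a : ℕ → ℝ≥0∞} (ha : b = false → a 0 = 0) {x : ℝ}
    (hx : x ∈ Set.Ioo 0 1) :
    ENNReal.ofReal (letterDensity b x) * ∑' k, a k * ENNReal.ofReal x ^ k =
      ∑' k, letterMul b a k * ENNReal.ofReal x ^ k := by
  cases b with
  | false =>
    have h_density : ENNReal.ofReal (letterDensity false x) = (ENNReal.ofReal x)⁻¹ := by
      simp [letterDensity, ENNReal.ofReal_inv_of_pos hx.1]
    rw [h_density, inv_mul_tsum_of_apply_zero (ha rfl) (by simpa using hx.1) ENNReal.ofReal_ne_top]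
    simp [letterMul]
  | true =>
    have h_density : ENNReal.ofReal (letterDensity true x) = (1 - ENNReal.ofReal x)⁻¹ := by
      simp [letterDensity, ENNReal.ofReal_inv_of_pos (sub_pos.2 hx.2), ENNReal.ofReal_sub _ hx.1.le]
    rw [h_density, inv_one_sub_mul_tsum]
    simp [letterMul]

/-- The coefficients of the power series in `t` of `iteratedIntegral p w t`, for a word that ends in
`dx/(1-x)`. -/
noncomputable def wordCoeff : ℕ → (ℕ → Bool) → ℕ → ℝ≥0∞
  | 0, _, k => if k = 0 then 1 else 0
  | _ + 1, _, 0 => 0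
  | p + 1, w, k + 1 =>
    ((k + 1 : ℕ) : ℝ≥0∞)⁻¹ * letterMul (w 0) (wordCoeff p fun i => w (i + 1)) k

theorem iteratedIntegral_eq_tsum (p : ℕ) (w : ℕ → Bool) (h_last : ∀ q, p = q + 1 → w q = true)
    {t : ℝ} (ht₀ : 0 ≤ t) (ht₁ : t ≤ 1) :
    iteratedIntegral p w t = ∑' k, wordCoeff p w k * ENNReal.ofReal t ^ k := by
  induction p generalizing w t with
  | zero =>
    rw [iteratedIntegral_zero, tsum_eq_single 0 fun k hk => by simp [wordCoeff, hk]]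
    simp [wordCoeff]
  | succ p ih =>
    have h_last' : ∀ q, p = q + 1 → w (q + 1) = true := fun q hq => hq ▸ h_last p rfl
    have h_const : w 0 = false → wordCoeff p (fun i => w (i + 1)) 0 = 0 := by
      cases p with
      | zero => simp [h_last 0 rfl]
      | succ q => exact fun _ => rfl
    calc iteratedIntegral (p + 1) w t
        = ∫⁻ x in Set.Ioo 0 t,
            ENNReal.ofReal (letterDensity (w 0) x) * iteratedIntegral p (fun i => w (i + 1)) x := by
          rw [iteratedIntegral_succ, setLIntegral_congr Ioo_ae_eq_Icc]
      _ = ∫⁻ x in Set.Ioo 0 t,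
            ∑' k, letterMul (w 0) (wordCoeff p fun i => w (i + 1)) k * ENNReal.ofReal x ^ k := by
          refine setLIntegral_congr_fun measurableSet_Ioo fun x hx => ?_
          have hx₁ : x < 1 := hx.2.trans_le ht₁
          rw [ih _ h_last' hx.1.le hx₁.le, letterDensity_mul_tsum h_const ⟨hx.1, hx₁⟩]
      _ = ∑' k, wordCoeff (p + 1) w (k + 1) * ENNReal.ofReal t ^ (k + 1) := by
          rw [setLIntegral_congr Ioo_ae_eq_Icc, lintegral_Icc_tsum_mul_ofReal_pow ht₀]
          rfl
      _ = ∑' k, wordCoeff (p + 1) w k * ENNReal.ofReal t ^ k := by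
          rw [tsum_eq_zero_add' (f := fun k => wordCoeff (p + 1) w k * _) ENNReal.summable]
          simp [wordCoeff]

lemma wordCoeff_add_of_forall_eq_false {a : ℕ} (q : ℕ) {w : ℕ → Bool}
    (hw : ∀ i < a, w i = false) (k : ℕ) :
    wordCoeff (q + a) w (k + 1) =
      ((k + 1 : ℕ) : ℝ≥0∞)⁻¹ ^ a * wordCoeff q (fun i => w (i + a)) (k + 1) := by
  induction a generalizing w with
  | zero => simp
  | succ a ih =>
    rw [← add_assoc, wordCoeff, hw 0 a.succ_pos, letterMul, if_neg Bool.false_ne_true,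
      ih fun i hi => hw (i + 1) (Nat.succ_lt_succ hi), pow_succ', mul_assoc]
    simp only [add_assoc]

lemma wordCoeff_add_of_block {a : ℕ} (q : ℕ) {w : ℕ → Bool}
    (hw : ∀ i < a, w i = false) (hwa : w a = true) (k : ℕ) :
    wordCoeff (q + (a + 1)) w (k + 1) = ((k + 1 : ℕ) : ℝ≥0∞)⁻¹ ^ (a + 1) *
      ∑ j ∈ range (k + 1), wordCoeff q (fun i => w (i + (a + 1))) j := by
  rw [← add_assoc, add_right_comm, wordCoeff_add_of_forall_eq_false _ hw, wordCoeff, zero_add, hwa,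
    letterMul, if_pos rfl, pow_succ, mul_assoc]
  simp only [add_assoc, add_comm 1 a]

end PowerSeries

section BlockWord

/-- The integration word of `ζ(n₁,…,n_r)`: its letters `dx/(1-x)` are those in the positions
`n₁, n₁+n₂, …, p`, where the position of the letter with index `j` is `j + 1`. -/
def blockWord {r : ℕ} (n : Fin r → ℕ) (j : ℕ) : Bool :=
  decide (∃ i : Fin r, j + 1 = ∑ i' ∈ Iic i, n i')

lemma blockWord_last {r : ℕ} (hr : 0 < r) {n : Fin r → ℕ} {q : ℕ} (hq : ∑ i, n i = q + 1) :
    blockWord n q = true := by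
  obtain ⟨r, rfl⟩ := Nat.exists_eq_succ_of_ne_zero hr.ne'
  exact decide_eq_true ⟨Fin.last r, by rw [← hq, ← Fin.top_eq_last, Iic_top]⟩

variable {r : ℕ} (n : Fin (r + 1) → ℕ)

lemma sum_Iic_zero : ∑ i ∈ Iic (0 : Fin (r + 1)), n i = n 0 := by
  rw [← bot_eq_zero, Iic_bot, sum_singleton]

lemma sum_Iic_succ (i : Fin r) :
    ∑ i' ∈ Iic i.succ, n i' = n 0 + ∑ i' ∈ Iic i, Fin.tail n i' := by
  rw [← Icc_bot, ← Ioc_insert_left bot_le, bot_eq_zero, ← Fin.map_succEmb_Iic,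
    sum_insert (by simp), sum_map]
  rfl

variable {n}

lemma blockWord_of_add_one_lt {j : ℕ} (hj : j + 1 < n 0) : blockWord n j = false := by
  simp only [blockWord, decide_eq_false_iff_not, Fin.exists_fin_succ, sum_Iic_zero, sum_Iic_succ]
  rintro (h | ⟨i, h⟩) <;> omega

lemma blockWord_of_add_one_eq {j : ℕ} (hj : j + 1 = n 0) : blockWord n j = true :=
  decide_eq_true ⟨0, by rw [hj, sum_Iic_zero]⟩

lemma blockWord_add_apply_zero (j : ℕ) : blockWord n (j + n 0) = blockWord (Fin.tail n) j := by
  have h_first : j + n 0 + 1 ≠ n 0 := by omega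
  have h_tail (s : ℕ) : j + n 0 + 1 = n 0 + s ↔ j + 1 = s := by omega
  simp only [blockWord, Fin.exists_fin_succ, sum_Iic_zero, sum_Iic_succ, h_first, h_tail, false_or]

lemma wordCoeff_blockWord_succ (hn : 1 ≤ n 0) (k : ℕ) :
    wordCoeff (∑ i, n i) (blockWord n) (k + 1) = ((k + 1 : ℕ) : ℝ≥0∞)⁻¹ ^ n 0 *
      ∑ j ∈ range (k + 1), wordCoeff (∑ i, Fin.tail n i) (blockWord (Fin.tail n)) j := by
  obtain ⟨a, ha⟩ := Nat.exists_eq_add_of_le' hn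
  have h_block := wordCoeff_add_of_block (∑ i, Fin.tail n i) (w := blockWord n)
    (fun i hi => blockWord_of_add_one_lt (by omega)) (blockWord_of_add_one_eq ha.symm) k
  rw [← ha] at h_block
  simp only [blockWord_add_apply_zero] at h_block
  rw [Fin.sum_univ_succ, add_comm]
  exact h_block

end BlockWord

section NestedSums

/-- The summation range `N > k₁ > ⋯ > k_r ≥ 1` of a truncated multiple zeta value. -/
def strictChains (r : ℕ) (N : ℕ∞) : Set (Fin r → ℕ) :=
  {k | ((∀ i, 1 ≤ k i) ∧ ∀ i j, i < j → k j < k i) ∧ ∀ i, (k i : ℕ∞) < N}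

lemma cons_mem_strictChains {r : ℕ} {N : ℕ∞} {j : ℕ} {k : Fin r → ℕ} :
    (Fin.cons j k : Fin (r + 1) → ℕ) ∈ strictChains (r + 1) N ↔
      (1 ≤ j ∧ (j : ℕ∞) < N) ∧ k ∈ strictChains r j := by
  simp only [strictChains, Set.mem_ofPred_eq, Fin.forall_fin_succ, Fin.cons_zero, Fin.cons_succ,
    Fin.succ_lt_succ_iff, Nat.cast_lt]
  constructor
  · rintro ⟨⟨⟨hj, hk⟩, ⟨-, hkj⟩, h_anti⟩, hjN, -⟩
    exact ⟨⟨hj, hjN⟩, ⟨hk, fun i => (h_anti i).2⟩, fun i => hkj i (Fin.succ_pos i)⟩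
  · rintro ⟨⟨hj, hjN⟩, ⟨hk, h_anti⟩, hkj⟩
    exact ⟨⟨⟨hj, hk⟩, ⟨fun h => absurd h (lt_irrefl _), fun i _ => hkj i⟩,
      fun i => ⟨fun h => absurd h (Fin.not_lt_zero _), h_anti i⟩⟩,
      hjN, fun i => (Nat.cast_lt.2 (hkj i)).trans hjN⟩

/-- The truncated multiple zeta value `∑_{N > k₁ > ⋯ > k_r ≥ 1} ∏ 1/k_i^{n_i}`, which for `N = ⊤` is
`ζ(n₁,…,n_r)`, as an extended nonnegative real. -/
noncomputable def truncatedZeta {r : ℕ} (n : Fin r → ℕ) (N : ℕ∞) : ℝ≥0∞ :=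
  ∑' k : strictChains r N, ∏ i, ((k.1 i : ℝ≥0∞)⁻¹) ^ n i

lemma truncatedZeta_fin_zero (n : Fin 0 → ℕ) (N : ℕ∞) : truncatedZeta n N = 1 := by
  simp [truncatedZeta, strictChains, tsum_fintype]

lemma truncatedZeta_fin_succ {r : ℕ} (n : Fin (r + 1) → ℕ) (N : ℕ∞) :
    truncatedZeta n N = ∑' j : ℕ, if ((j + 1 : ℕ) : ℕ∞) < N then
      ((j + 1 : ℕ) : ℝ≥0∞)⁻¹ ^ n 0 * truncatedZeta (Fin.tail n) (j + 1 : ℕ) else 0 := by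
  classical
  have h_index_zero (k : Fin r → ℕ) : (Fin.cons 0 k : Fin (r + 1) → ℕ) ∉ strictChains (r + 1) N :=
    fun h => absurd (cons_mem_strictChains.1 h).1.1 one_pos.not_ge
  rw [truncatedZeta, _root_.tsum_subtype _ fun k : Fin (r + 1) → ℕ => ∏ i, (k i : ℝ≥0∞)⁻¹ ^ n i,
    tsum_fin_succ, tsum_eq_zero_add' ENNReal.summable]
  simp only [Set.indicator_of_notMem (h_index_zero _), tsum_zero, zero_add]
  refine tsum_congr fun j => ?_
  split_ifs with hj
  · rw [truncatedZeta,
      _root_.tsum_subtype _ fun k : Fin r → ℕ => ∏ i, (k i : ℝ≥0∞)⁻¹ ^ Fin.tail n i,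
      ← ENNReal.tsum_mul_left]
    refine tsum_congr fun k => ?_
    simp only [Set.indicator_apply, cons_mem_strictChains, hj, and_true, Nat.le_add_left, true_and,
      mul_ite, mul_zero, Fin.prod_univ_succ, Fin.cons_zero, Fin.cons_succ, Fin.tail]
  · simp only [Set.indicator_apply, cons_mem_strictChains, hj, and_false, false_and, if_false,
      tsum_zero]

theorem tsum_wordCoeff_blockWord {r : ℕ} {n : Fin r → ℕ} (hn : ∀ i, 1 ≤ n i) {N : ℕ∞}
    (hN : N ≠ 0) :
    (∑' k : ℕ, if (k : ℕ∞) < N then wordCoeff (∑ i, n i) (blockWord n) k else 0) =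
      truncatedZeta n N := by
  induction r generalizing N with
  | zero =>
    rw [truncatedZeta_fin_zero, tsum_eq_single 0 fun k hk => by simp [wordCoeff, hk]]
    simp [wordCoeff, pos_iff_ne_zero, hN]
  | succ r ih =>
    have h_const : wordCoeff (∑ i, n i) (blockWord n) 0 = 0 := by
      obtain ⟨p, hp⟩ : ∃ p, ∑ i, n i = p + 1 :=
        Nat.exists_eq_add_of_le' ((hn 0).trans (single_le_sum_of_canonicallyOrdered (mem_univ 0)))
      rw [hp, wordCoeff]
    rw [tsum_eq_zero_add' ENNReal.summable, h_const, ite_self, zero_add, truncatedZeta_fin_succ]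
    refine tsum_congr fun k => ?_
    rw [wordCoeff_blockWord_succ (hn 0), ← tsum_ite_natCast_lt,
      ih (n := Fin.tail n) (fun i => hn i.succ) (Nat.cast_ne_zero.2 k.succ_ne_zero)]

lemma toReal_truncatedZeta_top {r : ℕ} (n : Fin r → ℕ) :
    (truncatedZeta n ⊤).toReal =
      ∑' k : {k : Fin r → ℕ // (∀ i, 1 ≤ k i) ∧ ∀ i j : Fin r, i < j → k j < k i},
        ∏ i, (1 : ℝ) / (k.1 i : ℝ) ^ n i := by
  have h_top : strictChains r ⊤ = {k | (∀ i, 1 ≤ k i) ∧ ∀ i j, i < j → k j < k i} := by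
    simp [strictChains]
  rw [truncatedZeta, h_top, ENNReal.tsum_toReal_eq]
  · exact tsum_congr fun k => by simp
  · intro k
    refine ENNReal.prod_ne_top fun i _ => ENNReal.pow_ne_top (ENNReal.inv_ne_top.2 ?_)
    exact Nat.cast_ne_zero.2 (Nat.one_le_iff_ne_zero.1 (k.2.1 i))

end NestedSums

theorem iteratedIntegral_blockWord_one {r : ℕ} (hr : 0 < r) {n : Fin r → ℕ} (hn : ∀ i, 1 ≤ n i) :
    iteratedIntegral (∑ i, n i) (blockWord n) 1 = truncatedZeta n ⊤ := by
  rw [iteratedIntegral_eq_tsum _ _ (fun q hq => blockWord_last hr hq) zero_le_one le_rfl,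
    ← tsum_wordCoeff_blockWord hn ENat.top_ne_zero]
  simp

end MultipleZeta

/-- The iterated integral representation of multiple zeta values:
for n₁ ≥ 2 (and all nᵢ ≥ 1), with p = n₁ + ⋯ + n_r,
ζ(n₁,…,n_r) = ∫_{0 ≤ u_p ≤ ⋯ ≤ u₁ ≤ 1} ∏ du_j/φ_j(u_j),
where φ_j(u) = 1-u if j is one of the partial sums n₁, n₁+n₂, …, p, and
φ_j(u) = u otherwise.  Here the variable `u i` for `i : Fin p` stands for
`u_{i+1}`, so the simplex condition is that `u` is antitone and takes values
in [0,1]. -/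
theorem mzv_iterated_integral_representation
    (r : ℕ) (hr : 0 < r) (n : Fin r → ℕ)
    (hn1 : ∀ i, 1 ≤ n i) (hn2 : 2 ≤ n ⟨0, hr⟩) :
    ∑' k : {k : Fin r → ℕ //
        (∀ i, 1 ≤ k i) ∧ ∀ i j : Fin r, i < j → k j < k i},
      ∏ i, (1 : ℝ) / (k.1 i : ℝ) ^ (n i) =
    ∫ u in {u : Fin (∑ i, n i) → ℝ |
        (∀ j, 0 ≤ u j ∧ u j ≤ 1) ∧ ∀ j k : Fin (∑ i, n i), j ≤ k → u k ≤ u j},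
      ∏ j : Fin (∑ i, n i), 1 / (if ∃ i : Fin r, (j : ℕ) + 1 = ∑ i' ∈ Finset.Iic i, n i'
                then 1 - u j else u j)
      ∂(volume : Measure (Fin (∑ i, n i) → ℝ)) := by
  open MultipleZeta in
  calc _ = (truncatedZeta n ⊤).toReal := (toReal_truncatedZeta_top n).symm
    _ = (iteratedIntegral (∑ i, n i) (blockWord n) 1).toReal := by
      rw [iteratedIntegral_blockWord_one hr hn1]
    _ = ∫ u in orderedSimplex (∑ i, n i) 1, ∏ j : Fin (∑ i, n i),
        letterDensity (blockWord n j) (u j) :=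
      toReal_iteratedIntegral _ _ le_rfl
    _ = _ := by
      simp only [orderedSimplex, letterDensity, blockWord, decide_eq_true_eq]
end

section
/- For the two-coloured rooted tree τ with black root (colour 0), one black child, and that child having two white children (colour 1) — i.e. the tree whose arborification gives 2x₀x₀x₁x₁ + x₀x₁x₀x₁ — the arborified multiple zeta value equals 2ζ(3,1) + ζ(2,2). -/
open MeasureTheory

/-- The double zeta value ζ(m,n) = ∑_{k > l ≥ 1} 1/(kᵐ lⁿ). -/
noncomputable def zeta2 (m n : ℕ) : ℝ :=
  ∑' p : {p : ℕ × ℕ // p.2 < p.1 ∧ 1 ≤ p.2},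
    (1 : ℝ) / ((p.1.1 : ℝ) ^ m * (p.1.2 : ℝ) ^ n)

/-!
The domain of a tree integral is the order polytope of the tree. Off the null set where two
coordinates agree, it splits into the chambers `u (σ 0) > u (σ 1) > ⋯`, one for each linear
extension `σ`, and on a chamber the integral is the iterated integral of a word in the forms
`dt / t` and `dt / (1 - t)`. For the tree at hand the words are `x₀x₁x₀x₁` once and `x₀x₀x₁x₁`
twice.

Iterated integrals are computed on power series: against `dt / t` the integral of `t ^ k` is
`t ^ k / k`, and against `dt / (1 - t) = ∑ t ^ j dt` it is `∑ t ^ (k + j + 1) / (k + j + 1)`. Thus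
each `x₁` opens a new, strictly larger summation index and each `x₀` raises the exponent of the
current one, which turns `x₀^(m-1) x₁ x₀^(n-1) x₁` into `ζ(m, n)`. All of this takes place in
`ℝ≥0∞`, so that convergence matters only when returning to the real number `ζ(m, n)`.
-/

open Set
open scoped ENNReal

/-- The iterated integral `∫_{t > t₁ > ⋯ > tₖ > 0} ∏ fᵢ(tᵢ) dtᵢ` of the word `f₁ ⋯ fₖ`, whose first
letter is integrated over the outermost variable. It is the integral attached to a word by
multiple zeta values. -/
noncomputable def iteratedIntegral : List (ℝ → ℝ≥0∞) → ℝ → ℝ≥0∞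
  | [], _ => 1
  | f :: w, t => ∫⁻ s in Ioo 0 t, f s * iteratedIntegral w s

section Simplex

/-- The open simplex `t > v 0 > v 1 > ⋯ > 0`, the domain of iterated integration. The coordinates
decrease so that they are read in the order of the letters of a word. -/
def decreasingSimplex (n : ℕ) (t : ℝ) : Set (Fin n → ℝ) :=
  {v | StrictAnti v ∧ ∀ i, v i ∈ Ioo 0 t}

variable {n : ℕ}

lemma measurableSet_decreasingSimplex (n : ℕ) (t : ℝ) :
    MeasurableSet (decreasingSimplex n t) := by
  unfold decreasingSimplex StrictAnti
  measurability

lemma cons_mem_decreasingSimplex_iff {s t : ℝ} {v : Fin n → ℝ} :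
    Fin.cons s v ∈ decreasingSimplex (n + 1) t ↔ s ∈ Ioo 0 t ∧ v ∈ decreasingSimplex n s := by
  simp only [decreasingSimplex, StrictAnti, mem_ofPred_eq, Fin.forall_fin_succ, Fin.cons_zero,
    Fin.cons_succ, mem_Ioo, Fin.succ_pos, Fin.succ_lt_succ_iff, Fin.not_lt_zero,
    true_imp_iff, false_imp_iff, true_and]
  constructor
  · rintro ⟨⟨hs, hv⟩, hst, hvt⟩
    exact ⟨hst, hv, fun i => ⟨(hvt i).1, hs i⟩⟩
  · rintro ⟨hst, hv, hvs⟩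
    exact ⟨⟨fun i => (hvs i).2, hv⟩, hst, fun i => ⟨(hvs i).1, (hvs i).2.trans hst.2⟩⟩

lemma lintegral_fin_cons {f : (Fin (n + 1) → ℝ) → ℝ≥0∞} (hf : Measurable f) :
    ∫⁻ u, f u = ∫⁻ s, ∫⁻ v : Fin n → ℝ, f (Fin.cons s v) := by
  let e := (MeasurableEquiv.piFinSuccAbove (fun _ : Fin (n + 1) => ℝ) 0).symm
  have he : MeasurePreserving e := (volume_preserving_piFinSuccAbove (fun _ => ℝ) 0).symm
  have e_apply (p : ℝ × (Fin n → ℝ)) : e p = Fin.cons p.1 p.2 := by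
    simp [e, MeasurableEquiv.piFinSuccAbove, Fin.insertNthEquiv]
  rw [← he.lintegral_comp hf, Measure.volume_eq_prod,
    lintegral_prod (fun p => f (e p)) (hf.comp e.measurable).aemeasurable]
  simp only [e_apply]

lemma setLIntegral_decreasingSimplex_prod {g : Fin n → ℝ → ℝ≥0∞} (hg : ∀ i, Measurable (g i))
    (t : ℝ) :
    ∫⁻ v in decreasingSimplex n t, ∏ i, g i (v i) = iteratedIntegral (List.ofFn g) t := by
  induction n generalizing t with
  | zero =>
    have huniv : decreasingSimplex 0 t = univ :=
      eq_univ_of_forall fun v => ⟨Subsingleton.strictAnti v, finZeroElim⟩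
    simp [huniv, iteratedIntegral, volume_pi]
  | succ n ih =>
    have slice (s : ℝ) (v : Fin n → ℝ) :
        (decreasingSimplex (n + 1) t).indicator (fun u => ∏ i, g i (u i)) (Fin.cons s v) =
          (Ioo 0 t).indicator (g 0) s *
            (decreasingSimplex n s).indicator (fun v => ∏ i, g i.succ (v i)) v := by
      classical
      simp only [indicator_apply, cons_mem_decreasingSimplex_iff, Fin.prod_univ_succ,
        Fin.cons_zero, Fin.cons_succ, ite_zero_mul_ite_zero]
    have hS := measurableSet_decreasingSimplex
    have hprod : Measurable fun u : Fin (n + 1) → ℝ => ∏ i, g i (u i) := by fun_prop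
    have hprod_succ : Measurable fun v : Fin n → ℝ => ∏ i, g i.succ (v i) := by fun_prop
    rw [← lintegral_indicator (hS _ _), lintegral_fin_cons (hprod.indicator (hS _ _)),
      List.ofFn_succ, iteratedIntegral, ← lintegral_indicator measurableSet_Ioo]
    refine lintegral_congr fun s => ?_
    simp_rw [slice]
    rw [lintegral_const_mul _ (hprod_succ.indicator (hS _ _)), lintegral_indicator (hS _ _),
      ih (fun i => hg i.succ), indicator_mul_left]

lemma setLIntegral_preimage_perm_decreasingSimplex_prod {g : Fin n → ℝ → ℝ≥0∞}
    (hg : ∀ i, Measurable (g i)) (σ : Equiv.Perm (Fin n)) (t : ℝ) :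
    ∫⁻ u in (· ∘ σ) ⁻¹' decreasingSimplex n t, ∏ i, g i (u i) =
      iteratedIntegral (List.ofFn (g ∘ σ)) t := by
  let e := MeasurableEquiv.piCongrLeft (fun _ : Fin n => ℝ) σ.symm
  have he : MeasurePreserving e := volume_measurePreserving_piCongrLeft _ _
  have e_apply (u : Fin n → ℝ) : e u = u ∘ σ := by
    ext i
    simpa using MeasurableEquiv.piCongrLeft_apply_apply (β := fun _ => ℝ) σ.symm u (σ i)
  have integrand (u : Fin n → ℝ) : ∏ i, g i (u i) = ∏ i, (g ∘ σ) i (e u i) := by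
    simp only [e_apply, Function.comp_apply, Equiv.prod_comp σ fun i => g i (u i)]
  simp_rw [integrand, ← funext e_apply]
  rw [he.setLIntegral_comp_preimage_emb e.measurableEmbedding (fun v => ∏ i, (g ∘ σ) i (v i)),
    setLIntegral_decreasingSimplex_prod (g := g ∘ σ) fun i => hg (σ i)]

end Simplex

section Order

lemma volume_setOf_apply_eq_apply {ι : Type*} [Fintype ι] {i j : ι} (hij : i ≠ j) :
    volume {u : ι → ℝ | u i = u j} = 0 := by
  classical
  let W : Submodule ℝ (ι → ℝ) := LinearMap.eqLocus (LinearMap.proj i) (LinearMap.proj j)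
  refine Measure.addHaar_submodule volume W fun hW => ?_
  have : Pi.single i (1 : ℝ) ∈ W := hW ▸ Submodule.mem_top
  simp [W, hij.symm] at this

lemma ae_injective {ι : Type*} [Fintype ι] : ∀ᵐ u : ι → ℝ, Function.Injective u := by
  have : ∀ᵐ u : ι → ℝ, ∀ i j, i ≠ j → u i ≠ u j := by
    simp only [ae_all_iff]
    exact fun i j hij => measure_eq_zero_iff_ae_notMem.1 (volume_setOf_apply_eq_apply hij)
  filter_upwards [this] with u hu i j
  exact not_imp_not.1 (hu i j)

lemma exists_perm_strictAnti_comp {α : Type*} [LinearOrder α] {n : ℕ} {u : Fin n → α}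
    (hu : Function.Injective u) :
    ∃ σ : Equiv.Perm (Fin n), StrictAnti (u ∘ σ) :=
  let v : Fin n → αᵒᵈ := OrderDual.toDual ∘ u
  ⟨Tuple.sort v, Antitone.strictAnti_of_injective (Tuple.monotone_sort v)
    (hu.comp (Equiv.injective _))⟩

lemma eq_of_strictAnti_comp_perm {α : Type*} [PartialOrder α] {n : ℕ} {u : Fin n → α}
    {σ τ : Equiv.Perm (Fin n)} (hσ : StrictAnti (u ∘ σ)) (hτ : StrictAnti (u ∘ τ)) : σ = τ := by
  have hu : Function.Injective u := (σ.injective_comp u).1 hσ.injective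
  ext1 i
  exact hu (congrFun (Tuple.unique_antitone hσ.antitone hτ.antitone) i)

/-- Stanley's order polytope of a relation `r`. When `r` is the parent-child relation of a rooted
tree, it is the domain `Δ_τ` of the tree integral. -/
def orderPolytope {ι : Type*} (r : ι → ι → Prop) : Set (ι → ℝ) :=
  {u | (∀ i, 0 ≤ u i ∧ u i ≤ 1) ∧ ∀ i j, r i j → u i ≤ u j}

lemma measurableSet_orderPolytope {ι : Type*} [Countable ι] (r : ι → ι → Prop) :
    MeasurableSet (orderPolytope r) := by
  unfold orderPolytope
  measurability

/-- The linear extensions of a relation `r`, which index the words of the arborification. Such a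
`σ` lists the vertices from the largest, `σ 0`, to the smallest, so `σ.symm i` is the position of
`i` in the list. -/
def linearExtensions {n : ℕ} (r : Fin n → Fin n → Prop) [DecidableRel r] :
    Finset (Equiv.Perm (Fin n)) :=
  {σ | ∀ i j, r i j → σ.symm j ≤ σ.symm i}

variable {n : ℕ} (r : Fin n → Fin n → Prop) [DecidableRel r]

lemma orderPolytope_ae_eq_biUnion_linearExtensions :
    orderPolytope r =ᵐ[volume]
      ⋃ σ ∈ linearExtensions r, (· ∘ σ) ⁻¹' decreasingSimplex n 1 := by
  have cube : univ.pi (fun _ : Fin n => Ioo (0 : ℝ) 1) =ᵐ[volume] Icc 0 1 :=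
    Measure.univ_pi_Ioo_ae_eq_Icc
  refine Filter.eventuallyEq_set.2 ?_
  filter_upwards [cube.mem_iff, ae_injective] with u hcube hu
  obtain ⟨σ, hσ⟩ := exists_perm_strictAnti_comp hu
  have hr : (∀ i j, r i j → u i ≤ u j) ↔ σ ∈ linearExtensions r := by
    have h i j : u i ≤ u j ↔ σ.symm j ≤ σ.symm i := by
      simpa using hσ.le_iff_ge (a := σ.symm i) (b := σ.symm j)
    simp [linearExtensions, h]
  have hcube' : (∀ i, 0 ≤ u i ∧ u i ≤ 1) ↔ ∀ i, u (σ i) ∈ Ioo 0 1 := by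
    rw [σ.forall_congr_left (p := fun i => u (σ i) ∈ Ioo (0 : ℝ) 1)]
    simpa [Pi.le_def, forall_and] using hcube.symm
  simp only [orderPolytope, mem_ofPred_eq, hr, hcube', mem_iUnion, mem_preimage, exists_prop,
    decreasingSimplex, Function.comp_apply]
  constructor
  · exact fun ⟨hu01, hσr⟩ => ⟨σ, hσr, hσ, hu01⟩
  · rintro ⟨τ, hτr, hτ, hu01⟩
    obtain rfl := eq_of_strictAnti_comp_perm hσ hτ
    exact ⟨hu01, hτr⟩

theorem setLIntegral_orderPolytope_prod {g : Fin n → ℝ → ℝ≥0∞} (hg : ∀ i, Measurable (g i)) :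
    ∫⁻ u in orderPolytope r, ∏ i, g i (u i) =
      ∑ σ ∈ linearExtensions r, iteratedIntegral (List.ofFn (g ∘ σ)) 1 := by
  have hmeas (σ : Equiv.Perm (Fin n)) :
      MeasurableSet ((· ∘ σ) ⁻¹' decreasingSimplex n 1 : Set (Fin n → ℝ)) :=
    measurableSet_preimage (by fun_prop) (measurableSet_decreasingSimplex n 1)
  rw [setLIntegral_congr (orderPolytope_ae_eq_biUnion_linearExtensions r),
    lintegral_biUnion_finset _ fun σ _ => hmeas σ]
  · simp only [setLIntegral_preimage_perm_decreasingSimplex_prod hg]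
  · refine fun σ _ τ _ hστ => disjoint_left.2 fun u hσ hτ => hστ ?_
    exact eq_of_strictAnti_comp_perm hσ.1 hτ.1

end Order

section Series

/-- The density of the form `x₀ = dt / t` on `t > 0`. Its value is `∞` for `t ≤ 0`. -/
noncomputable def form₀ (t : ℝ) : ℝ≥0∞ := (ENNReal.ofReal t)⁻¹

/-- The density of the form `x₁ = dt / (1 - t)` on `t < 1`. Its value is `∞` for `t ≥ 1`, in
agreement with the geometric series. -/
noncomputable def form₁ (t : ℝ) : ℝ≥0∞ := (ENNReal.ofReal (1 - t))⁻¹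

lemma measurable_form₀ : Measurable form₀ := by
  unfold form₀
  fun_prop

lemma measurable_form₁ : Measurable form₁ := by
  unfold form₁
  fun_prop

lemma toReal_form₀ {t : ℝ} (ht : 0 ≤ t) : (form₀ t).toReal = t⁻¹ := by
  rw [form₀, ENNReal.toReal_inv, ENNReal.toReal_ofReal ht]

lemma toReal_form₁ {t : ℝ} (ht : t ≤ 1) : (form₁ t).toReal = (1 - t)⁻¹ := by
  rw [form₁, ENNReal.toReal_inv, ENNReal.toReal_ofReal (sub_nonneg.2 ht)]

lemma setLIntegral_Ioo_ofReal_pow (n : ℕ) (t : ℝ) :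
    ∫⁻ s in Ioo 0 t, ENNReal.ofReal s ^ n = (n + 1 : ℝ≥0∞)⁻¹ * ENNReal.ofReal t ^ (n + 1) := by
  rcases le_or_gt t 0 with ht | ht
  · simp [ENNReal.ofReal_of_nonpos ht, Ioo_eq_empty_of_le ht]
  have hint : IntegrableOn (fun s : ℝ => s ^ n) (Ioo 0 t) :=
    (continuous_pow n).integrableOn_Icc.mono_set Ioo_subset_Icc_self
  calc ∫⁻ s in Ioo 0 t, ENNReal.ofReal s ^ n
      = ∫⁻ s in Ioo 0 t, ENNReal.ofReal (s ^ n) :=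
        setLIntegral_congr_fun measurableSet_Ioo fun s hs => (ENNReal.ofReal_pow hs.1.le n).symm
    _ = ENNReal.ofReal (∫ s in Ioo 0 t, s ^ n) :=
        (ofReal_integral_eq_lintegral_ofReal hint <| ae_restrict_of_forall_mem measurableSet_Ioo
          fun s hs => pow_nonneg hs.1.le n).symm
    _ = ENNReal.ofReal ((n + 1 : ℝ)⁻¹ * t ^ (n + 1)) := by
        rw [← integral_Ioc_eq_integral_Ioo, ← intervalIntegral.integral_of_le ht.le, integral_pow,
          zero_pow n.succ_ne_zero, sub_zero, div_eq_inv_mul]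
    _ = (n + 1 : ℝ≥0∞)⁻¹ * ENNReal.ofReal t ^ (n + 1) := by
        rw [ENNReal.ofReal_mul (by positivity), ENNReal.ofReal_pow ht.le,
          ENNReal.ofReal_inv_of_pos (by positivity)]
        norm_cast

variable {ι : Type*} [Countable ι] {c : ι → ℝ≥0∞} {k : ι → ℕ} {w : List (ℝ → ℝ≥0∞)}

lemma iteratedIntegral_form₀_cons
    (hw : ∀ t, iteratedIntegral w t = ∑' i, c i * ENNReal.ofReal t ^ (k i + 1)) (t : ℝ) :
    iteratedIntegral (form₀ :: w) t =
      ∑' i, c i * (k i + 1 : ℝ≥0∞)⁻¹ * ENNReal.ofReal t ^ (k i + 1) := by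
  have integrand : ∀ s ∈ Ioo 0 t, form₀ s * iteratedIntegral w s =
      ∑' i, c i * ENNReal.ofReal s ^ k i := by
    intro s hs
    have hs0 : ENNReal.ofReal s ≠ 0 := (ENNReal.ofReal_pos.2 hs.1).ne'
    rw [hw, ← ENNReal.tsum_mul_left]
    refine tsum_congr fun i => ?_
    rw [form₀, pow_succ', mul_left_comm, ENNReal.inv_mul_cancel_left hs0 ENNReal.ofReal_ne_top]
  rw [iteratedIntegral, setLIntegral_congr_fun measurableSet_Ioo integrand,
    lintegral_tsum fun i => by fun_prop]
  refine tsum_congr fun i => ?_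
  rw [lintegral_const_mul _ (by fun_prop), setLIntegral_Ioo_ofReal_pow, mul_assoc]

lemma iteratedIntegral_replicate_form₀_append
    (hw : ∀ t, iteratedIntegral w t = ∑' i, c i * ENNReal.ofReal t ^ (k i + 1)) (m : ℕ) (t : ℝ) :
    iteratedIntegral (List.replicate m form₀ ++ w) t =
      ∑' i, c i * (k i + 1 : ℝ≥0∞)⁻¹ ^ m * ENNReal.ofReal t ^ (k i + 1) := by
  induction m generalizing t with
  | zero => simpa using hw t
  | succ m ih =>
    rw [List.replicate_succ, List.cons_append, iteratedIntegral_form₀_cons ih]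
    simp only [pow_succ, mul_assoc]

lemma iteratedIntegral_form₁_cons
    (hw : ∀ t, iteratedIntegral w t = ∑' i, c i * ENNReal.ofReal t ^ k i) (t : ℝ) :
    iteratedIntegral (form₁ :: w) t =
      ∑' p : ι × ℕ, c p.1 * ((k p.1 + p.2 : ℕ) + 1 : ℝ≥0∞)⁻¹ *
        ENNReal.ofReal t ^ (k p.1 + p.2 + 1) := by
  have integrand : ∀ s ∈ Ioo 0 t, form₁ s * iteratedIntegral w s =
      ∑' p : ι × ℕ, c p.1 * ENNReal.ofReal s ^ (k p.1 + p.2) := by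
    intro s hs
    rw [hw, form₁, ENNReal.ofReal_sub 1 hs.1.le, ENNReal.ofReal_one, ← ENNReal.tsum_geometric,
      mul_comm, ENNReal.tsum_prod', ← ENNReal.tsum_mul_right]
    simp only [← ENNReal.tsum_mul_left, pow_add, mul_assoc]
  rw [iteratedIntegral, setLIntegral_congr_fun measurableSet_Ioo integrand,
    lintegral_tsum fun i => by fun_prop]
  refine tsum_congr fun i => ?_
  rw [lintegral_const_mul _ (by fun_prop), setLIntegral_Ioo_ofReal_pow, mul_assoc]

end Series

section DoubleZeta

lemma summable_one_div_add_one_rpow {s : ℝ} (hs : 1 < s) :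
    Summable fun n : ℕ => 1 / (n + 1 : ℝ) ^ s := by
  refine ((Real.summable_one_div_nat_add_rpow 1 s).2 hs).congr fun n => ?_
  rw [abs_of_pos (by positivity)]

/-- The parametrisation `(k, l) = (a + b + 2, a + 1)` of the indices `k > l ≥ 1` of a double zeta
value by the exponents `a`, `b` of the two geometric series in its iterated integral. -/
def zetaIndexEquiv : ℕ × ℕ ≃ {p : ℕ × ℕ // p.2 < p.1 ∧ 1 ≤ p.2} where
  toFun q := ⟨(q.1 + q.2 + 2, q.1 + 1), by omega, by omega⟩
  invFun p := (p.1.2 - 1, p.1.1 - p.1.2 - 1)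
  left_inv q := by ext <;> dsimp only <;> omega
  right_inv p := by ext <;> dsimp only <;> omega

lemma rpow_three_halves_mul_rpow_three_halves_le {x y : ℝ} (hx : 0 < x) (hy : 0 < y) :
    x ^ (3 / 2 : ℝ) * y ^ (3 / 2 : ℝ) ≤ (x + y) ^ 2 * x := by
  calc x ^ (3 / 2 : ℝ) * y ^ (3 / 2 : ℝ)
      = x * x ^ (1 / 2 : ℝ) * y ^ (3 / 2 : ℝ) := by
        rw [← Real.rpow_one_add' hx.le (by norm_num)]
        norm_num
    _ ≤ x * (x + y) ^ (1 / 2 : ℝ) * (x + y) ^ (3 / 2 : ℝ) := by gcongr <;> linarith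
    _ = (x + y) ^ 2 * x := by
        rw [mul_assoc, ← Real.rpow_add (by positivity), mul_comm]
        norm_num

lemma summable_zeta2 {m n : ℕ} (hm : 2 ≤ m) (hn : 1 ≤ n) :
    Summable fun p : {p : ℕ × ℕ // p.2 < p.1 ∧ 1 ≤ p.2} =>
      (1 : ℝ) / ((p.1.1 : ℝ) ^ m * (p.1.2 : ℝ) ^ n) := by
  have hsum : Summable fun a : ℕ => 1 / (a + 1 : ℝ) ^ (3 / 2 : ℝ) :=
    summable_one_div_add_one_rpow (by norm_num)
  have hle (a b : ℕ) : (a + 1 : ℝ) ^ (3 / 2 : ℝ) * (b + 1 : ℝ) ^ (3 / 2 : ℝ) ≤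
      ((a + b + 2 : ℕ) : ℝ) ^ m * ((a + 1 : ℕ) : ℝ) ^ n := by
    calc (a + 1 : ℝ) ^ (3 / 2 : ℝ) * (b + 1 : ℝ) ^ (3 / 2 : ℝ)
        ≤ ((a + 1 : ℝ) + (b + 1)) ^ 2 * (a + 1) :=
          rpow_three_halves_mul_rpow_three_halves_le (by positivity) (by positivity)
      _ = ((a + b + 2 : ℕ) : ℝ) ^ 2 * ((a + 1 : ℕ) : ℝ) ^ 1 := by
          push_cast
          ring
      _ ≤ ((a + b + 2 : ℕ) : ℝ) ^ m * ((a + 1 : ℕ) : ℝ) ^ n := by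
          gcongr <;> norm_cast <;> omega
  rw [← zetaIndexEquiv.summable_iff]
  refine Summable.of_nonneg_of_le (fun q => ?_) (fun q => ?_)
    (hsum.mul_of_nonneg hsum (fun _ => by positivity) fun _ => by positivity)
  · rw [Function.comp_apply]
    positivity
  · rw [one_div_mul_one_div]
    exact one_div_le_one_div_of_le (by positivity) (hle q.1 q.2)

lemma zeta2_nonneg (m n : ℕ) : 0 ≤ zeta2 m n :=
  tsum_nonneg fun _ => by positivity

lemma ofReal_zeta2 {m n : ℕ} (hm : 2 ≤ m) (hn : 1 ≤ n) :
    ENNReal.ofReal (zeta2 m n) =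
      ∑' p : {p : ℕ × ℕ // p.2 < p.1 ∧ 1 ≤ p.2},
        (p.1.1 : ℝ≥0∞)⁻¹ ^ m * (p.1.2 : ℝ≥0∞)⁻¹ ^ n := by
  rw [zeta2, ENNReal.ofReal_tsum_of_nonneg (fun _ => by positivity) (summable_zeta2 hm hn)]
  refine tsum_congr fun ⟨(k, l), hkl, hl⟩ => ?_
  have hk0 : (0 : ℝ) < k := by exact_mod_cast (by omega : 0 < k)
  have hl0 : (0 : ℝ) < l := by exact_mod_cast hl
  rw [one_div, mul_inv, ENNReal.ofReal_mul (by positivity), ← inv_pow, ← inv_pow,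
    ENNReal.ofReal_pow (by positivity), ENNReal.ofReal_pow (by positivity),
    ENNReal.ofReal_inv_of_pos hk0, ENNReal.ofReal_inv_of_pos hl0, ENNReal.ofReal_natCast,
    ENNReal.ofReal_natCast]

/-- The word `x₀ᵐ x₁ x₀ⁿ x₁`, whose iterated integral over `(0, 1)` is `ζ(m + 1, n + 1)`. -/
noncomputable def zetaWord (m n : ℕ) : List (ℝ → ℝ≥0∞) :=
  List.replicate m form₀ ++ form₁ :: (List.replicate n form₀ ++ [form₁])

lemma iteratedIntegral_singleton_form₁ (t : ℝ) :
    iteratedIntegral [form₁] t = ∑' a : ℕ, (a + 1 : ℝ≥0∞)⁻¹ * ENNReal.ofReal t ^ (a + 1) := by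
  have nil (t : ℝ) : iteratedIntegral [] t = ∑' _ : Unit, 1 * ENNReal.ofReal t ^ 0 := by
    simp [iteratedIntegral]
  rw [iteratedIntegral_form₁_cons nil, ← (Equiv.punitProd ℕ).symm.tsum_eq]
  simp

theorem iteratedIntegral_zetaWord {m : ℕ} (hm : m ≠ 0) (n : ℕ) :
    iteratedIntegral (zetaWord m n) 1 = ENNReal.ofReal (zeta2 (m + 1) (n + 1)) := by
  rw [zetaWord, iteratedIntegral_replicate_form₀_append (iteratedIntegral_form₁_cons
      (iteratedIntegral_replicate_form₀_append iteratedIntegral_singleton_form₁ n)),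
    ofReal_zeta2 (by omega) (by omega), ← zetaIndexEquiv.tsum_eq]
  refine tsum_congr fun ⟨a, b⟩ => ?_
  have hk : a + b + 2 = a + 1 + b + 1 := by ring
  simp only [zetaIndexEquiv, Equiv.coe_fn_mk, hk, ENNReal.ofReal_one, one_pow, mul_one, pow_succ']
  push_cast
  ring

end DoubleZeta

section Tree

/-- The parent-child relation of the tree `τ`: the root `0` has the children `1` and `2`, and `2`
has the child `3`. -/
abbrev TreeEdge (i j : Fin 4) : Prop :=
  (i, j) ∈ ({(0, 1), (0, 2), (2, 3)} : Finset (Fin 4 × Fin 4))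

/-- The density `1 / f_{e_v}` at each vertex `v` of the tree `τ`: colour `1` at the vertices `0`
and `2`, colour `0` at the leaves. -/
noncomputable def treeForm : Fin 4 → ℝ → ℝ≥0∞ :=
  ![form₁, form₀, form₁, form₀]

lemma measurable_treeForm : ∀ i, Measurable (treeForm i)
  | 0 | 2 => measurable_form₁
  | 1 | 3 => measurable_form₀

lemma toReal_prod_treeForm {u : Fin 4 → ℝ} (hu : ∀ i, 0 ≤ u i ∧ u i ≤ 1) :
    (∏ i, treeForm i (u i)).toReal = 1 / ((1 - u 0) * u 1 * (1 - u 2) * u 3) := by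
  calc (∏ i, treeForm i (u i)).toReal
      = (form₁ (u 0)).toReal * (form₀ (u 1)).toReal * (form₁ (u 2)).toReal *
          (form₀ (u 3)).toReal := by
        simp only [Fin.prod_univ_four, ENNReal.toReal_mul]
        rfl
    _ = 1 / ((1 - u 0) * u 1 * (1 - u 2) * u 3) := by
        rw [toReal_form₁ (hu 0).2, toReal_form₀ (hu 1).1, toReal_form₁ (hu 2).2,
          toReal_form₀ (hu 3).1, one_div, mul_inv, mul_inv, mul_inv]

lemma linearExtensions_treeEdge :
    linearExtensions TreeEdge =
      {Equiv.swap 0 3 * Equiv.swap 1 2, Equiv.swap 0 3, c[0, 1, 3]} := by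
  decide

lemma setLIntegral_orderPolytope_treeEdge :
    ∫⁻ u in orderPolytope TreeEdge, ∏ i, treeForm i (u i) =
      ENNReal.ofReal (2 * zeta2 3 1 + zeta2 2 2) := by
  rw [setLIntegral_orderPolytope_prod _ measurable_treeForm, linearExtensions_treeEdge,
    Finset.sum_insert (by decide), Finset.sum_pair (by decide)]
  have word_x₀x₁x₀x₁ :
      List.ofFn (treeForm ∘ (Equiv.swap 0 3 * Equiv.swap 1 2 : Equiv.Perm (Fin 4))) =
        zetaWord 1 1 := rfl
  have word_x₀x₀x₁x₁ : List.ofFn (treeForm ∘ Equiv.swap (0 : Fin 4) 3) = zetaWord 2 0 := rfl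
  have word_x₀x₀x₁x₁' : List.ofFn (treeForm ∘ (c[0, 1, 3] : Equiv.Perm (Fin 4))) =
      zetaWord 2 0 := rfl
  have h31 := zeta2_nonneg 3 1
  have h22 := zeta2_nonneg 2 2
  rw [word_x₀x₁x₀x₁, word_x₀x₀x₁x₁, word_x₀x₀x₁x₁', iteratedIntegral_zetaWord one_ne_zero,
    iteratedIntegral_zetaWord two_ne_zero, ← ENNReal.ofReal_add h31 h31,
    ← ENNReal.ofReal_add h22 (add_nonneg h31 h31), two_mul, add_comm]

end Tree

/-- The arborified multiple zeta value of the two-coloured rooted tree whose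
simple arborification is 2x₀x₀x₁x₁ + x₀x₁x₀x₁: the vertices are the root
(colour 1, variable u 0), a leaf child of the root (colour 0, variable u 1),
another child of the root (colour 1, variable u 2) and its child, a leaf
(colour 0, variable u 3).  The tree integral over the simplex Δ_τ (where u_v
≤ u_w whenever w lies above v) of ∏ du_v/f_{e_v}(u_v), with f₀(u) = u and
f₁(u) = 1-u, equals 2ζ(3,1) + ζ(2,2). -/
theorem arborified_mzv_tree_eq :
    ∫ u in {u : Fin 4 → ℝ | (∀ j, 0 ≤ u j ∧ u j ≤ 1) ∧
        u 0 ≤ u 1 ∧ u 0 ≤ u 2 ∧ u 2 ≤ u 3},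
        1 / ((1 - u 0) * u 1 * (1 - u 2) * u 3)
        ∂(volume : Measure (Fin 4 → ℝ))
      = 2 * zeta2 3 1 + zeta2 2 2 := by
  have hset : {u : Fin 4 → ℝ | (∀ j, 0 ≤ u j ∧ u j ≤ 1) ∧ u 0 ≤ u 1 ∧ u 0 ≤ u 2 ∧ u 2 ≤ u 3} =
      orderPolytope TreeEdge := by
    ext u
    simp [orderPolytope, Fin.forall_fin_succ, TreeEdge, and_assoc]
  have hval := setLIntegral_orderPolytope_treeEdge
  have hmeas : Measurable fun u : Fin 4 → ℝ => ∏ i, treeForm i (u i) := by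
    have := measurable_treeForm
    fun_prop
  rw [hset]
  calc ∫ u in orderPolytope TreeEdge, 1 / ((1 - u 0) * u 1 * (1 - u 2) * u 3)
      = ∫ u in orderPolytope TreeEdge, (∏ i, treeForm i (u i)).toReal :=
        setIntegral_congr_fun (measurableSet_orderPolytope _) fun u hu =>
          (toReal_prod_treeForm hu.1).symm
    _ = (∫⁻ u in orderPolytope TreeEdge, ∏ i, treeForm i (u i)).toReal :=
        integral_toReal hmeas.aemeasurable (ae_lt_top hmeas (hval ▸ ENNReal.ofReal_ne_top))
    _ = 2 * zeta2 3 1 + zeta2 2 2 := by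
        rw [hval, ENNReal.toReal_ofReal]
        linarith [zeta2_nonneg 3 1, zeta2_nonneg 2 2]
end
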